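/- arXiv:1711.04253 — 7 statements merged into one kernel-verified Lean document; each statement's English description precedes it below -/
import Mathlib

section
/- The family consisting of the elements S_{e_i} S_{e_j}^* for (i,j) ∈ Λ together with the elements p_v for v ∈ I is linearly independent over ℂ. -/
theorem linInd_of_sep {ι A : Type*} [Ring A] [Algebra ℂ A] (f L R : ι → A)
    (h0 : ∀ x y, x ≠ y → L x * f y * R x = 0) (h1 : ∀ x, L x * f x * R x ≠ 0) :
    LinearIndependent ℂ f := by
  rw [linearIndependent_iff']
  intro F g hg x hx
  have h : L x * (∑ y ∈ F, g y • f y) * R x = 0 := by rw [hg]; simp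
  rw [Finset.mul_sum, Finset.sum_mul, Finset.sum_eq_single x] at h
  · rw [mul_smul_comm, smul_mul_assoc] at h
    exact (smul_eq_zero.mp h).resolve_right (h1 x)
  · intro y _ hy
    rw [mul_smul_comm, smul_mul_assoc, h0 x y hy.symm, smul_zero]
  · intro h'
    exact absurd hx h'

/-- For a finite connected directed graph `Γ` (source map `s`, target map `t`)
and elements `S i`, `p v` of a unital complex star algebra `A` satisfying the graph
C*-algebra relations, the family of elements `S i * (S j)^*` for `(i,j) ∈ Λ`
(the pairs with `S i * (S j)^* ≠ 0`) together with the `p v` for `v ∈ I`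
(the vertices that are not a source of any edge) is linearly independent over `ℂ`. -/
theorem graph_algebra_basis_linearIndependent
    (n m : ℕ) (s t : Fin n → Fin m)
    (A : Type*) [Ring A] [Algebra ℂ A] [StarRing A] [StarModule ℂ A]
    (S : Fin n → A) (p : Fin m → A)
    (hp_sa : ∀ v, star (p v) = p v)
    (hp_orth : ∀ v w, p v * p w = if v = w then p v else 0)
    (hSS : ∀ i, star (S i) * S i = p (t i))
    (hCK : ∀ v : Fin m, (∃ j, s j = v) →
      ∑ j ∈ Finset.univ.filter (fun j => s j = v), S j * star (S j) = p v)
    (hSorth : ∀ i j, i ≠ j → star (S i) * S j = 0)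
    (hSt : ∀ i, S i * p (t i) = S i)
    (hsS : ∀ i, p (s i) * S i = S i)
    (hconn : ∀ v : Fin m, (∃ i, s i = v) ∨ (∃ i, t i = v))
    (hpne : ∀ v, p v ≠ 0) :
    LinearIndependent ℂ
      (fun x : {ij : Fin n × Fin n // S ij.1 * star (S ij.2) ≠ 0} ⊕
               {v : Fin m // ∀ i, s i ≠ v} =>
        Sum.elim (fun ij => S ij.1.1 * star (S ij.1.2)) (fun v => p v.1) x) := by
  have hpS : ∀ v i, s i ≠ v → p v * S i = 0 := by
    intro v i h
    rw [← hsS i, ← mul_assoc, hp_orth, if_neg (Ne.symm h), zero_mul]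
  have hpt : ∀ i, p (t i) * star (S i) = star (S i) := by
    intro i
    have := congrArg star (hSt i)
    rwa [star_mul, hp_sa] at this
  have ht : ∀ i j, S i * star (S j) ≠ 0 → t i = t j := by
    intro i j h
    by_contra hne
    apply h
    rw [← hSt i, ← hpt j, mul_assoc, ← mul_assoc (p (t i)), hp_orth, if_neg hne, zero_mul,
      mul_zero]
  have key : ∀ k l i j, star (S k) * (S i * star (S j)) * S l
      = (star (S k) * S i) * (star (S j) * S l) := by
    intro k l i j
    simp only [mul_assoc]
  refine linInd_of_sep _ (Sum.elim (fun ij => star (S ij.1.1)) (fun v => p v.1))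
    (Sum.elim (fun ij => S ij.1.2) (fun v => p v.1)) ?_ ?_
  · rintro (⟨⟨k, l⟩, hkl⟩ | ⟨v, hv⟩) (⟨⟨i, j⟩, hij⟩ | ⟨w, hw⟩) hne
    · simp only [Sum.elim_inl]
      rw [key]
      by_cases hk : k = i
      · have hl : j ≠ l := by
          rintro rfl
          subst hk
          exact hne rfl
        rw [hSorth j l hl, mul_zero]
      · rw [hSorth k i hk, zero_mul]
    · simp only [Sum.elim_inl, Sum.elim_inr]
      rw [mul_assoc, hpS w l (hw l), mul_zero]
    · simp only [Sum.elim_inl, Sum.elim_inr]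
      rw [← mul_assoc, hpS v i (hv i), zero_mul, zero_mul]
    · simp only [Sum.elim_inr]
      have hvw : v ≠ w := by
        rintro rfl
        exact hne rfl
      rw [hp_orth v w, if_neg hvw, zero_mul]
  · rintro (⟨⟨k, l⟩, hkl⟩ | ⟨v, hv⟩)
    · simp only [Sum.elim_inl]
      rw [key, hSS, hSS, hp_orth, if_pos (ht k l hkl)]
      exact hpne _
    · simp only [Sum.elim_inr]
      rw [hp_orth, if_pos rfl, hp_orth, if_pos rfl]
      exact hpne _
end

section
/- For every edge e_i, the identity Σ_{k=1}^{n} u_{s(e_i)s(e_k)} u_{t(e_i)t(e_k)} u_{t(e_i)t(e_k)} u_{s(e_i)s(e_k)} = 1 holds, where the sum runs over all edges e_k of Γ. -/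
/-- Let `Γ` be a finite directed graph without multiple edges or loops and let
`u i j` be elements of a unital complex star algebra `Q` satisfying the relations of Banica's
quantum automorphism group of `Γ`.  Then for every edge `e_i`,
`Σ_k u_{s(e_i)s(e_k)} u_{t(e_i)t(e_k)} u_{t(e_i)t(e_k)} u_{s(e_i)s(e_k)} = 1`. -/
theorem banica_sum_eq_one
    (n m : ℕ) (s t : Fin n → Fin m)
    (hnomult : Function.Injective (fun e => (s e, t e)))
    (hnoloop : ∀ e, s e ≠ t e)
    (Q : Type*) [Ring Q] [Algebra ℂ Q] [StarRing Q] [StarModule ℂ Q]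
    (u : Fin m → Fin m → Q)
    (h_sa : ∀ i j, star (u i j) = u i j)
    (h_row : ∀ i j k, u i j * u i k = if j = k then u i j else 0)
    (h_col : ∀ i j k, u j i * u k i = if j = k then u j i else 0)
    (h_rowsum : ∀ i, ∑ l, u i l = 1)
    (h_colsum : ∀ i, ∑ l, u l i = 1)
    (h_edge : ∀ (j : Fin n) (i k : Fin m), (∀ e, ¬(s e = i ∧ t e = k)) →
      u (s j) i * u (t j) k = 0 ∧ u (t j) k * u (s j) i = 0 ∧
      u i (s j) * u k (t j) = 0 ∧ u k (t j) * u i (s j) = 0) :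
    ∀ i : Fin n,
      ∑ k, u (s i) (s k) * u (t i) (t k) * u (t i) (t k) * u (s i) (s k) = 1 := by
  intro i
  let F : Fin m × Fin m → Q := fun p => u (s i) p.1 * u (t i) p.2 * u (t i) p.2 * u (s i) p.1
  have h1 : ∑ k, F (s k, t k) = ∑ p, F p := by
    refine Fintype.sum_of_injective (fun e => (s e, t e)) hnomult _ _ ?_ (fun _ => rfl)
    rintro ⟨a, b⟩ hp
    have h := (h_edge i a b (fun e he => hp ⟨e, by simp [he.1, he.2]⟩)).1
    simp [F, h]
  have h2 : ∑ p, F p = 1 := by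
    rw [Fintype.sum_prod_type, ← h_rowsum (s i)]
    refine Finset.sum_congr rfl fun a _ => ?_
    have h3 : ∀ b, F (a, b) = u (s i) a * u (t i) b * u (s i) a := by
      intro b
      have := h_row (t i) b b
      simp only [if_true] at this
      simp only [F]
      rw [mul_assoc (u (s i) a), this]
    simp only [h3]
    rw [← Finset.sum_mul, ← Finset.mul_sum, h_rowsum, mul_one, h_row, if_pos rfl]
  exact h1.trans h2
end

section
/- For every pair of distinct edges e_i ≠ e_j with t(e_i) = t(e_j), the identity Σ_{k=1}^{n} u_{s(e_i)s(e_k)} u_{t(e_i)t(e_k)} u_{t(e_j)t(e_k)} u_{s(e_j)s(e_k)} = 0 holds, where the sum runs over all edges e_k of Γ. -/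
/-- Let `Γ` be a finite directed graph without multiple edges or loops and let
`u i j` be elements of a unital complex star algebra `Q` satisfying the relations of Banica's
quantum automorphism group of `Γ`.  Then for every pair of distinct edges `e_i ≠ e_j` with
`t(e_i) = t(e_j)`, `Σ_k u_{s(e_i)s(e_k)} u_{t(e_i)t(e_k)} u_{t(e_j)t(e_k)} u_{s(e_j)s(e_k)} = 0`. -/
theorem banica_sum_eq_zero
    (n m : ℕ) (s t : Fin n → Fin m)
    (hnomult : Function.Injective (fun e => (s e, t e)))
    (hnoloop : ∀ e, s e ≠ t e)
    (Q : Type*) [Ring Q] [Algebra ℂ Q] [StarRing Q] [StarModule ℂ Q]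
    (u : Fin m → Fin m → Q)
    (h_sa : ∀ i j, star (u i j) = u i j)
    (h_row : ∀ i j k, u i j * u i k = if j = k then u i j else 0)
    (h_col : ∀ i j k, u j i * u k i = if j = k then u j i else 0)
    (h_rowsum : ∀ i, ∑ l, u i l = 1)
    (h_colsum : ∀ i, ∑ l, u l i = 1)
    (h_edge : ∀ (j : Fin n) (i k : Fin m), (∀ e, ¬(s e = i ∧ t e = k)) →
      u (s j) i * u (t j) k = 0 ∧ u (t j) k * u (s j) i = 0 ∧
      u i (s j) * u k (t j) = 0 ∧ u k (t j) * u i (s j) = 0) :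
    ∀ i j : Fin n, i ≠ j → t i = t j →
      ∑ k, u (s i) (s k) * u (t i) (t k) * u (t j) (t k) * u (s j) (s k) = 0 := by
  intro i j hij ht
  have hs : s i ≠ s j := fun h => hij (hnomult (Prod.ext h ht))
  -- extend the sum over edges to a sum over all pairs of vertices
  have key : ∑ k, u (s i) (s k) * u (t i) (t k) * u (t j) (t k) * u (s j) (s k)
      = ∑ x : Fin m × Fin m, u (s i) x.1 * u (t i) x.2 * u (s j) x.1 := by
    refine Fintype.sum_of_injective (fun e => (s e, t e)) hnomult _ _ ?_ ?_
    · rintro ⟨p, q⟩ hpq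
      have h := (h_edge i p q (fun e he => hpq ⟨e, Prod.ext he.1 he.2⟩)).1
      simp only [h, zero_mul]
    · intro k
      have h := h_row (t i) (t k) (t k)
      rw [if_pos rfl] at h
      rw [← ht, mul_assoc (u (s i) (s k)), h]
  rw [key, Fintype.sum_prod_type]
  refine Finset.sum_eq_zero fun p _ => ?_
  simp only []
  rw [← Finset.sum_mul, ← Finset.mul_sum, h_rowsum, mul_one, h_col, if_neg hs]
end

section
/- Let e_k be an edge whose target t(e_k) is not the source of any edge. For each edge e_l set f_l = 1 if t(e_l) is not the source of any edge, and f_l = #{e : s(e) = t(e_l)} otherwise. Then Σ_{l=1}^{n} f_l · u_{t(e_k)t(e_l)} u_{s(e_k)s(e_l)} u_{t(e_k)t(e_l)} = 1, where the sum runs over all edges e_l of Γ; in particular all terms with t(e_l) the source of some edge vanish. -/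
open scoped Classical in
/-- Let `Γ` be a finite directed graph without multiple edges or loops and let
`u i j` be elements of a unital complex star algebra `Q` satisfying the relations of Banica's
quantum automorphism group of `Γ`, together with the conclusion of Lemma 3.7 of
Schmidt–Weber.  Let `e_k` be an edge whose target is not the source of any edge, and for
each edge `e_l` set `f l = 1` if `t(e_l)` is not a source, and `f l = #{e : s e = t(e_l)}`
otherwise.  Then `Σ_l f l • (u_{t(e_k)t(e_l)} u_{s(e_k)s(e_l)} u_{t(e_k)t(e_l)}) = 1`, and
every term with `t(e_l)` the source of some edge vanishes. -/
theorem banica_sink_sum_eq_one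
    (n m : ℕ) (s t : Fin n → Fin m)
    (hnomult : Function.Injective (fun e => (s e, t e)))
    (hnoloop : ∀ e, s e ≠ t e)
    (Q : Type*) [Ring Q] [Algebra ℂ Q] [StarRing Q] [StarModule ℂ Q]
    (u : Fin m → Fin m → Q)
    (h_sa : ∀ i j, star (u i j) = u i j)
    (h_row : ∀ i j k, u i j * u i k = if j = k then u i j else 0)
    (h_col : ∀ i j k, u j i * u k i = if j = k then u j i else 0)
    (h_rowsum : ∀ i, ∑ l, u i l = 1)
    (h_colsum : ∀ i, ∑ l, u l i = 1)
    (h_edge : ∀ (j : Fin n) (i k : Fin m), (∀ e, ¬(s e = i ∧ t e = k)) →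
      u (s j) i * u (t j) k = 0 ∧ u (t j) k * u (s j) i = 0 ∧
      u i (s j) * u k (t j) = 0 ∧ u k (t j) * u i (s j) = 0)
    (h_weber : ∀ (j : Fin n) (v : Fin m), (∀ e, s e ≠ v) →
      u v (s j) = 0 ∧ u (s j) v = 0)
    (k : Fin n) (hk : ∀ e, s e ≠ t k)
    (f : Fin n → ℕ)
    (hf : ∀ l, f l = if ∀ e, s e ≠ t l then 1
      else (Finset.univ.filter (fun e => s e = t l)).card) :
    (∑ l, f l • (u (t k) (t l) * u (s k) (s l) * u (t k) (t l)) = 1) ∧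
    (∀ l : Fin n, (∃ e, s e = t l) →
      u (t k) (t l) * u (s k) (s l) * u (t k) (t l) = 0) := by
  have hvan : ∀ l : Fin n, (∃ e, s e = t l) →
      u (t k) (t l) * u (s k) (s l) * u (t k) (t l) = 0 := by
    rintro l ⟨e, he⟩
    have h := (h_weber e (t k) hk).1
    rw [he] at h
    simp [h]
  refine ⟨?_, hvan⟩
  have h1 : ∀ l, f l • (u (t k) (t l) * u (s k) (s l) * u (t k) (t l))
      = u (t k) (t l) * u (s k) (s l) * u (t k) (t l) := by
    intro l
    by_cases h : ∀ e, s e ≠ t l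
    · rw [hf l, if_pos h, one_smul]
    · push Not at h
      rw [hvan l h, smul_zero]
  rw [Finset.sum_congr rfl (fun l _ => h1 l)]
  have h2 : ∑ l, u (t k) (t l) * u (s k) (s l) * u (t k) (t l)
      = ∑ p : Fin m × Fin m, u (t k) p.2 * u (s k) p.1 * u (t k) p.2 := by
    refine Finset.sum_of_injOn (fun e => (s e, t e)) hnomult.injOn (by simp) ?_ (by simp)
    rintro ⟨i, j⟩ _ hij
    have hne : ∀ e, ¬(s e = i ∧ t e = j) := by
      rintro e ⟨rfl, rfl⟩
      exact hij ⟨e, by simp, rfl⟩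
    simp [(h_edge k i j hne).2.1]
  rw [h2, Fintype.sum_prod_type_right]
  simp only [← Finset.sum_mul, ← Finset.mul_sum, h_rowsum, mul_one]
  simp [h_row, h_rowsum]
end

section
/- Every q_k (1 ≤ k ≤ n) is unitary: q_k^* q_k = q_k q_k^* = 1. -/
open scoped TensorProduct in
theorem aux_tmul_cancel {A Q : Type*} [AddCommGroup A] [Module ℂ A] [AddCommGroup Q] [Module ℂ Q]
    (a : A) (x y : Q) (ha : a ≠ 0) (h : a ⊗ₜ[ℂ] x = a ⊗ₜ[ℂ] y) : x = y := by
  have hex : ∃ f : Module.Dual ℂ A, f a ≠ 0 := by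
    by_contra! hc
    exact ha ((Module.forall_dual_apply_eq_zero_iff ℂ a).1 hc)
  obtain ⟨f, hf⟩ := hex
  have h2 := congrArg (TensorProduct.lid ℂ Q ∘ LinearMap.rTensor Q f) h
  simp only [Function.comp, LinearMap.rTensor_tmul, TensorProduct.lid_tmul] at h2
  exact smul_right_injective Q hf h2

open scoped TensorProduct in
/-- Let `A` be a unital complex star algebra containing nonzero elements
`S 1, …, S n` and self-adjoint idempotents `p 0, …, p n` satisfying the relations of the
graph C*-algebra of the line graph with `n` consecutive edges, and let `Q` be a unital
C*-algebra with elements `q 1, …, q n` satisfying `q (i+1) q (i+1)^* = q i^* q i` and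
`Σ_i S_i S_i^* ⊗ q_i q_i^* + S_n^* S_n ⊗ q_n^* q_n = 1 ⊗ 1` in `A ⊗[ℂ] Q`.
Then every `q k` is unitary. -/
theorem line_graph_coefficients_unitary
    (n : ℕ) (hn : 1 ≤ n)
    (A : Type*) [Ring A] [Algebra ℂ A] [StarRing A] [StarModule ℂ A]
    (S : ℕ → A) (p : ℕ → A)
    (hS_ne : ∀ i, 1 ≤ i → i ≤ n → S i ≠ 0)
    (hp_sa : ∀ i, i ≤ n → star (p i) = p i)
    (hp_idem : ∀ i, i ≤ n → p i * p i = p i)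
    (h1 : S 1 * star (S 1) = p 0)
    (h2 : star (S n) * S n = p n)
    (h3 : ∑ i ∈ Finset.range (n + 1), p i = 1)
    (h4 : ∀ i, 1 ≤ i → i ≤ n - 1 →
      star (S i) * S i = p i ∧ S (i + 1) * star (S (i + 1)) = p i)
    (h5 : ∀ i j, 1 ≤ i → i ≤ n → 1 ≤ j → j ≤ n → i ≠ j →
      star (S i) * S j = 0 ∧ S i * star (S j) = 0)
    (h6 : ∀ k, 1 ≤ k → k ≤ n → S k * star (S k) * S k = S k)
    (h7 : ∀ k, 1 ≤ k → k ≤ n → S n * S k = 0)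
    (Q : Type*) [NormedRing Q] [StarRing Q] [CStarRing Q] [NormOneClass Q]
    [NormedAlgebra ℂ Q] [StarModule ℂ Q] [CompleteSpace Q]
    (q : ℕ → Q)
    (hq : ∀ i, 1 ≤ i → i ≤ n - 1 → q (i + 1) * star (q (i + 1)) = star (q i) * q i)
    (hten : ∑ i ∈ Finset.Icc 1 n, (S i * star (S i)) ⊗ₜ[ℂ] (q i * star (q i))
        + (star (S n) * S n) ⊗ₜ[ℂ] (star (q n) * q n)
      = (1 : A) ⊗ₜ[ℂ] (1 : Q)) :
    ∀ k, 1 ≤ k → k ≤ n → star (q k) * q k = 1 ∧ q k * star (q k) = 1 := by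
  have key : ∀ b : A, ∑ i ∈ Finset.Icc 1 n, (S i * star (S i) * b) ⊗ₜ[ℂ] (q i * star (q i))
        + (star (S n) * S n * b) ⊗ₜ[ℂ] (star (q n) * q n) = b ⊗ₜ[ℂ] (1 : Q) := by
    intro b
    have h := congrArg (LinearMap.rTensor Q (LinearMap.mulRight ℂ b)) hten
    simpa only [map_add, map_sum, LinearMap.rTensor_tmul, LinearMap.mulRight_apply, one_mul]
      using h
  have hR : ∀ k, 1 ≤ k → k ≤ n → q k * star (q k) = 1 := by
    intro k hk1 hkn
    have h := key (S k)
    rw [Finset.sum_eq_single k, h6 k hk1 hkn, mul_assoc, h7 k hk1 hkn, mul_zero,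
      TensorProduct.zero_tmul, add_zero] at h
    · exact aux_tmul_cancel _ _ _ (hS_ne k hk1 hkn) h
    · intro i hi hik
      rw [Finset.mem_Icc] at hi
      rw [mul_assoc, (h5 i k hi.1 hi.2 hk1 hkn hik).1, mul_zero, TensorProduct.zero_tmul]
    · intro hk
      exact absurd (Finset.mem_Icc.2 ⟨hk1, hkn⟩) hk
  have hL : star (q n) * q n = 1 := by
    have h := key (star (S n))
    rw [Finset.sum_eq_zero, zero_add] at h
    · have h8 := congrArg star (h6 n hn le_rfl)
      simp only [star_mul, star_star] at h8
      rw [mul_assoc, h8] at h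
      exact aux_tmul_cancel _ _ _ (star_ne_zero.2 (hS_ne n hn le_rfl)) h
    · intro i hi
      rw [Finset.mem_Icc] at hi
      rw [mul_assoc, ← star_mul, h7 i hi.1 hi.2, star_zero, mul_zero, TensorProduct.zero_tmul]
  intro k hk1 hkn
  refine ⟨?_, hR k hk1 hkn⟩
  rcases eq_or_lt_of_le hkn with rfl | hlt
  · exact hL
  · rw [← hq k hk1 (by omega)]
    exact hR (k + 1) (by omega) (by omega)
end

section
/- The products q_{11} q_{21}, q_{21} q_{11}, q_{22} q_{12} and q_{12} q_{22} all vanish. -/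
/-- Let `Q` be a unital C*-algebra and `q11, q12, q21, q22 ∈ Q` the matrix
coefficients of a linear τ-preserving action on the graph C*-algebra of the complete graph
on two vertices, so that `q11^* q12 = 0`, `q21^* q22 = 0`, `q11^* q11 = q22 q22^*`,
`q11 q11^* = q22^* q22`, `q21^* q21 = q12 q12^*` and `q21 q21^* = q12^* q12`.
Then `q11 q21 = q21 q11 = q22 q12 = q12 q22 = 0`. -/
theorem complete_graph_coefficients_products_vanish
    (Q : Type*) [NormedRing Q] [StarRing Q] [CStarRing Q] [NormOneClass Q]
    [CompleteSpace Q]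
    (q11 q12 q21 q22 : Q)
    (h1 : star q11 * q12 = 0)
    (h2 : star q21 * q22 = 0)
    (h3 : star q11 * q11 = q22 * star q22)
    (h4 : q11 * star q11 = star q22 * q22)
    (h5 : star q21 * q21 = q12 * star q12)
    (h6 : q21 * star q21 = star q12 * q12) :
    q11 * q21 = 0 ∧ q21 * q11 = 0 ∧ q22 * q12 = 0 ∧ q12 * q22 = 0 := by
  have h1' : star q12 * q11 = 0 := by simpa using congrArg star h1
  have h2' : star q22 * q21 = 0 := by simpa using congrArg star h2
  have key : ∀ x y z : Q, star x * x = z * star z → star z * y = 0 → x * y = 0 := by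
    intro x y z h h0
    rw [← CStarRing.star_mul_self_eq_zero_iff]
    calc star (x * y) * (x * y) = star y * (star x * x) * y := by
          simp only [star_mul, mul_assoc]
      _ = star y * z * (star z * y) := by rw [h]; simp only [mul_assoc]
      _ = 0 := by rw [h0, mul_zero]
  exact ⟨key _ _ _ h3 h2', key _ _ _ h5 h1', key _ _ _ h4.symm h1, key _ _ _ h6.symm h2⟩
end

section
/- The element a is a normal partial isometry: a^* a = a a^* and a a^* a = a. By symmetry of the hypotheses, the same conclusions hold for b. -/
theorem aux_normal {Q : Type*} [Ring Q] [StarRing Q] (a b : Q)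
    (h1 : star a * a + star b * b = 1)
    (h2 : a * star a + b * star b = 1)
    (h3 : a * b = 0)
    (h4 : b * a = 0) :
    star a * a = a * star a ∧ a * star a * a = a := by
  have e1 : star a * a * a = a := by
    have h := congrArg (· * a) h1
    simpa [add_mul, mul_assoc, h4] using h
  have e2 : a * (a * star a) = a := by
    have h := congrArg (a * ·) h2
    simpa [mul_add, ← mul_assoc, h3] using h
  have e3 : star a * a = a * star a := by
    calc star a * a = star a * (a * (a * star a)) := by rw [e2]
      _ = (star a * a * a) * star a := by simp only [mul_assoc]
      _ = a * star a := by rw [e1]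
  exact ⟨e3, by rw [← e3, e1]⟩

/-- Let `Q` be a unital C*-algebra and `a, b ∈ Q` with
`a^* a + b^* b = 1`, `a a^* + b b^* = 1`, `a b = 0` and `b a = 0`.
Then `a` is a normal partial isometry (`a^* a = a a^*` and `a a^* a = a`),
and likewise `b` is a normal partial isometry. -/
theorem normal_partial_isometry_of_relations
    (Q : Type*) [NormedRing Q] [StarRing Q] [CStarRing Q] [NormOneClass Q]
    [CompleteSpace Q]
    (a b : Q)
    (h1 : star a * a + star b * b = 1)
    (h2 : a * star a + b * star b = 1)
    (h3 : a * b = 0)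
    (h4 : b * a = 0) :
    (star a * a = a * star a ∧ a * star a * a = a) ∧
    (star b * b = b * star b ∧ b * star b * b = b) := by
  exact ⟨aux_normal a b h1 h2 h3 h4,
    aux_normal b a (by rw [add_comm, h1]) (by rw [add_comm, h2]) h4 h3⟩
end
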